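/- (Clebsch–Gordan formula for the adjoint of Sym^n.) Let n ≥ 1 and let sl_{n+1}(ℂ) be the space of trace-zero (n+1)×(n+1) complex matrices, on which SL₂(ℂ) acts by A · X = M_A X M_A^{−1}, where M_A is the matrix of Sym^n(A) in the monomial basis of V_n. Then there is a ℂ-linear SL₂(ℂ)-equivariant isomorphism sl_{n+1}(ℂ) ≅ ⊕_{i=1}^{n} V_{2i}, where SL₂(ℂ) acts on each summand V_{2i} via Sym^{2i}. -/

import Mathlib

noncomputable section

open MvPolynomial Matrix

/-- `V k`: the space of homogeneous polynomials of degree `k` in two variables `X = X 0`,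
`Y = X 1`. -/
abbrev Vhom (k : ℕ) : Submodule ℂ (MvPolynomial (Fin 2) ℂ) :=
  homogeneousSubmodule (Fin 2) ℂ k

/-- Substitution of the variables by the linear forms determined by the *transpose* of `A`,
i.e. `X_i ↦ ∑ j, A j i • X j`; this is `P ↦ P ∘ Aᵗ`. -/
def substMap (A : Matrix (Fin 2) (Fin 2) ℂ) :
    MvPolynomial (Fin 2) ℂ →ₐ[ℂ] MvPolynomial (Fin 2) ℂ :=
  aeval fun i => ∑ j : Fin 2, C (A j i) * X j

lemma substMap_isHomogeneous (A : Matrix (Fin 2) (Fin 2) ℂ) {k : ℕ}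
    {p : MvPolynomial (Fin 2) ℂ} (hp : p.IsHomogeneous k) :
    (substMap A p).IsHomogeneous k := by
  have hg : ∀ i : Fin 2, ((fun i : Fin 2 => ∑ j : Fin 2, C (A j i) * X j) i).IsHomogeneous 1 := by
    intro i
    apply MvPolynomial.IsHomogeneous.sum
    intro j _
    simpa using (MvPolynomial.isHomogeneous_X ℂ j).C_mul (A j i)
  rw [substMap]
  simpa using hp.aeval _ hg

/-- The representation `Sym^k` of `SL(2,ℂ)` on the space `Vhom k` of homogeneous polynomials of
degree `k`: the action of `A` is `P ↦ P ∘ Aᵗ`. -/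
def SymSL (k : ℕ) (A : Matrix.SpecialLinearGroup (Fin 2) ℂ) : Vhom k →ₗ[ℂ] Vhom k :=
  ((substMap A.1).toLinearMap).restrict fun _p hp =>
    (MvPolynomial.mem_homogeneousSubmodule _ _).2
      (substMap_isHomogeneous A.1 ((MvPolynomial.mem_homogeneousSubmodule _ _).1 hp))

/-- The space `sl_{n+1}(ℂ)`, realized as the trace-zero endomorphisms of the
`(n+1)`-dimensional space `V_n`, on which `SL₂(ℂ)` acts by conjugation through `Sym^n`. -/
def slV (n : ℕ) : Submodule ℂ (Module.End ℂ (Vhom n)) :=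
  LinearMap.ker (LinearMap.trace ℂ (Vhom n))

abbrev CGFun : Type := ((Fin 2 → ℂ) × (Fin 2 → ℂ)) → ℂ

/-- the monomial x^a y^b -/
def cgMon (n a b : ℕ) (h : a + b = n) : Vhom n :=
  ⟨X 0 ^ a * X 1 ^ b, by
    rw [mem_homogeneousSubmodule]
    have := ((isHomogeneous_X ℂ (0 : Fin 2)).pow a).mul ((isHomogeneous_X ℂ (1 : Fin 2)).pow b)
    simpa [h] using this⟩

def cgExp (a b : ℕ) : Fin 2 →₀ ℕ := Finsupp.single 0 a + Finsupp.single 1 b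

lemma cgExp_inj {a b ax bx : ℕ} : cgExp a b = cgExp ax bx ↔ a = ax ∧ b = bx := by
  constructor
  · intro h
    have h0 := DFunLike.congr_fun h 0
    have h1 := DFunLike.congr_fun h 1
    simp [cgExp] at h0 h1
    exact ⟨h0, h1⟩
  · rintro ⟨rfl, rfl⟩; rfl

lemma cgMon_eq (a b : ℕ) : (X 0 ^ a * X 1 ^ b : MvPolynomial (Fin 2) ℂ) = monomial (cgExp a b) 1 := by
  simp [X_pow_eq_monomial, monomial_mul, cgExp]

/-- coefficient coordinates on `Vhom n` -/
def cgCoord (n : ℕ) : Vhom n →ₗ[ℂ] (Fin (n + 1) → ℂ) :=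
  LinearMap.pi fun k => (lcoeff ℂ (cgExp k.val (n - k.val))) ∘ₗ (Vhom n).subtype

lemma cgCoord_apply (n : ℕ) (p : Vhom n) (k : Fin (n + 1)) :
    cgCoord n p k = coeff (cgExp k.val (n - k.val)) p.1 := rfl

lemma cgCoord_inj (n : ℕ) : Function.Injective (cgCoord n) := by
  rw [← LinearMap.ker_eq_bot, LinearMap.ker_eq_bot']
  intro p hp
  apply Subtype.ext
  ext d
  simp only [ZeroMemClass.coe_zero, coeff_zero]
  by_contra hne
  have hd := (mem_homogeneousSubmodule _ _).1 p.2 hne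
  have hdx : d 0 + d 1 = n := by
    simpa [Finsupp.weight_apply, Finsupp.sum_fintype, Fin.sum_univ_two] using hd
  have := congrFun hp ⟨d 0, by omega⟩
  rw [cgCoord_apply] at this
  apply hne
  have e : d = cgExp (d 0) (n - d 0) := by
    ext i; fin_cases i
    · simp [cgExp]
    · simp [cgExp]; omega
  rw [e]; exact this

lemma cgCoord_mon (n : ℕ) (j k : Fin (n + 1)) :
    cgCoord n (cgMon n j.val (n - j.val) (by omega)) k = if j = k then 1 else 0 := by
  rw [cgCoord_apply]
  simp only [cgMon]
  rw [cgMon_eq, coeff_monomial]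
  congr 1
  rw [cgExp_inj, Fin.ext_iff]
  apply propext
  constructor
  · exact fun h => h.1
  · intro h; simp [h]

lemma cgCoord_surj (n : ℕ) : Function.Surjective (cgCoord n) := by
  intro c
  refine ⟨∑ j, c j • cgMon n j.val (n - j.val) (by omega), ?_⟩
  ext k
  simp [map_sum, Finset.sum_apply, cgCoord_mon]

def cgEquiv (n : ℕ) : Vhom n ≃ₗ[ℂ] (Fin (n + 1) → ℂ) :=
  LinearEquiv.ofBijective (cgCoord n) ⟨cgCoord_inj n, cgCoord_surj n⟩

instance cg_finite (n : ℕ) : Module.Finite ℂ (Vhom n) := Module.Finite.equiv (cgEquiv n).symm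

lemma cg_finrank (n : ℕ) : Module.finrank ℂ (Vhom n) = n + 1 := by
  rw [(cgEquiv n).finrank_eq]; simp

lemma cg_expand (n : ℕ) (p : Vhom n) :
    p = ∑ j, cgCoord n p j • cgMon n j.val (n - j.val) (by omega) := by
  apply cgCoord_inj n
  ext k
  simp [map_sum, Finset.sum_apply, cgCoord_mon]

/-- the linear form `u ↦ u ∧ v` -/
def cgEll (v : Fin 2 → ℂ) : MvPolynomial (Fin 2) ℂ := C (v 1) * X 0 - C (v 0) * X 1

def cgEllPow (n : ℕ) (v : Fin 2 → ℂ) : Vhom n :=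
  ⟨cgEll v ^ n, by
    rw [mem_homogeneousSubmodule]
    have h : (cgEll v).IsHomogeneous 1 := by
      apply IsHomogeneous.sub
      · simpa using (isHomogeneous_X ℂ (0 : Fin 2)).C_mul (v 1)
      · simpa using (isHomogeneous_X ℂ (1 : Fin 2)).C_mul (v 0)
    simpa using h.pow n⟩

lemma cgEllPow_expand (n : ℕ) (v : Fin 2 → ℂ) :
    cgEllPow n v = ∑ j : Fin (n + 1), ((v 1) ^ j.val * (- v 0) ^ (n - j.val) * (n.choose j.val : ℂ)) •
      cgMon n j.val (n - j.val) (by omega) := by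
  apply Subtype.ext
  simp only [cgEllPow, cgEll, cgMon, AddSubmonoidClass.coe_finsetSum, SetLike.val_smul]
  rw [Fin.sum_univ_eq_sum_range (fun j => ((v 1) ^ j * (- v 0) ^ (n - j) * (n.choose j : ℂ)) •
      (X 0 ^ j * X 1 ^ (n - j) : MvPolynomial (Fin 2) ℂ)), sub_eq_add_neg, add_pow]
  apply Finset.sum_congr rfl
  intro j _
  rw [smul_eq_C_mul, ← neg_mul, ← C_neg, mul_pow, mul_pow]
  simp only [map_mul, map_pow, map_natCast]
  ring

/-- The kernel of an operator. -/
def cgK (n : ℕ) : Module.End ℂ (Vhom n) →ₗ[ℂ] CGFun where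
  toFun T := fun w => eval w.1 (T (cgEllPow n w.2)).1
  map_add' S T := by ext w; simp
  map_smul' c T := by ext w; simp

lemma cgK_apply (n : ℕ) (T : Module.End ℂ (Vhom n)) (u v : Fin 2 → ℂ) :
    cgK n T (u, v) = eval u (T (cgEllPow n v)).1 := rfl

lemma cg_inj_aux {M N : Type} [AddCommMonoid M] [AddCommMonoid N] [Module ℂ M] [Module ℂ N]
    (f : M →ₗ[ℂ] N) (h : ∀ x, f x = 0 → x = 0) : Function.Injective f := by
  intro x y hxy
  have h1 : x + (-1 : ℂ) • y = 0 := by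
    apply h
    rw [map_add, map_smul, hxy]
    nth_rewrite 1 [← one_smul ℂ (f y)]
    rw [← add_smul]; simp
  have h2 : y + (-1 : ℂ) • y = 0 := by
    nth_rewrite 1 [← one_smul ℂ y]
    rw [← add_smul]; simp
  calc x = x + ((-1 : ℂ) • y + y) := by rw [add_comm _ y, h2, add_zero]
    _ = y := by rw [← add_assoc, h1, zero_add]

lemma cgK_inj (n : ℕ) : Function.Injective (cgK n) := by
  refine cg_inj_aux (cgK n) ?_
  intro T hT
  have key : ∀ j : Fin (n + 1), T (cgMon n j.val (n - j.val) (by omega)) = 0 := by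
    intro j
    apply Subtype.ext
    apply MvPolynomial.funext
    intro u
    simp only [ZeroMemClass.coe_zero, map_zero]
    let P : Polynomial ℂ := ∑ j : Fin (n + 1), Polynomial.monomial j.val ((n.choose j.val : ℂ) *
      eval u (T (cgMon n j.val (n - j.val) (by omega))).1)
    have hP : P = 0 := by
      apply Polynomial.funext
      intro s
      have h := congrFun hT (u, ![-1, s])
      rw [cgK_apply, cgEllPow_expand] at h
      simp only [map_sum, map_smul, AddSubmonoidClass.coe_finsetSum, SetLike.val_smul, smul_eval] at h
      simp only [P, Polynomial.eval_finset_sum, Polynomial.eval_monomial, Polynomial.eval_zero]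
      simp at h
      rw [← h]
      apply Finset.sum_congr rfl
      intro i _
      ring
    have hc := congrArg (fun p => Polynomial.coeff p j.val) hP
    simp only [P, Polynomial.finset_sum_coeff, Polynomial.coeff_monomial, Polynomial.coeff_zero] at hc
    simp only [← Fin.ext_iff, Finset.sum_ite_eq', Finset.mem_univ, if_true] at hc
    rcases mul_eq_zero.1 hc with h | h
    · exfalso
      exact (Nat.choose_pos (Nat.lt_succ_iff.1 j.2)).ne' (by exact_mod_cast h)
    · exact h
  ext1 p
  rw [cg_expand n p]
  simp [map_sum, key]

def cgU : Submodule ℂ CGFun := Submodule.span ℂ {fun w => w.1 0, fun w => w.1 1}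
def cgV : Submodule ℂ CGFun := Submodule.span ℂ {fun w => w.2 0, fun w => w.2 1}

lemma cg_span_pow (x y : CGFun) (n : ℕ) (S : Submodule ℂ CGFun)
    (h : ∀ a b, a + b = n → x ^ a * y ^ b ∈ S) :
    (Submodule.span ℂ {x, y}) ^ n ≤ S := by
  induction n generalizing S with
  | zero =>
    rw [pow_zero, Submodule.one_le]
    simpa using h 0 0 rfl
  | succ n ih =>
    rw [pow_succ, Submodule.mul_le]
    intro m hm z hz
    have h1 : ∀ zx ∈ ({x, y} : Set CGFun), m ∈ S.comap (LinearMap.mulRight ℂ zx) := by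
      intro zx hzx
      refine ih (S.comap (LinearMap.mulRight ℂ zx)) ?_ hm
      intro a b hab
      simp only [Submodule.mem_comap, LinearMap.mulRight_apply]
      rcases hzx with rfl | rfl
      · have := h (a + 1) b (by omega)
        convert this using 1; ring
      · have := h a (b + 1) (by omega)
        convert this using 1; ring
    have h2 : Submodule.span ℂ {x, y} ≤ S.comap (LinearMap.mulLeft ℂ m) := by
      rw [Submodule.span_le]
      intro zx hzx
      exact h1 zx hzx
    exact h2 hz

lemma cgK_range (n : ℕ) : cgU ^ n * cgV ^ n ≤ LinearMap.range (cgK n) := by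
  rw [Submodule.mul_le]
  intro p hp q hq
  have h1 : ∀ qx : Fin (n + 1), p ∈ (LinearMap.range (cgK n)).comap (LinearMap.mulRight ℂ
      (fun w => w.2 1 ^ qx.val * w.2 0 ^ (n - qx.val) : CGFun)) := by
    intro k
    refine cg_span_pow _ _ n _ ?_ hp
    intro a b hab
    let c : ℂ := (n.choose k.val : ℂ) * (-1) ^ (n - k.val)
    have hc : c ≠ 0 := by
      apply mul_ne_zero
      · exact_mod_cast (Nat.choose_pos (Nat.lt_succ_iff.1 k.2)).ne'
      · exact pow_ne_zero _ (by norm_num)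
    refine ⟨LinearMap.smulRight (LinearMap.proj k ∘ₗ cgCoord n) (c⁻¹ • cgMon n a b hab), ?_⟩
    ext ⟨u, v⟩
    rw [cgK_apply, cgEllPow_expand]
    simp only [LinearMap.smulRight_apply, LinearMap.comp_apply, LinearMap.proj_apply, map_sum,
      map_smul, cgCoord_mon, ite_smul, zero_smul, one_smul, smul_ite, smul_zero,
      Finset.sum_ite_eq', Finset.mem_univ, if_true, SetLike.val_smul, smul_eval]
    simp only [cgMon, LinearMap.mulRight_apply, Pi.mul_apply, Pi.pow_apply, map_mul, map_pow, eval_X]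
    rw [neg_pow (v 0)]
    field_simp
    simp only [c]; ring
  have h2 : cgV ^ n ≤ (LinearMap.range (cgK n)).comap (LinearMap.mulLeft ℂ p) := by
    apply cg_span_pow
    intro a b hab
    have := h1 ⟨b, by omega⟩
    simp only [Submodule.mem_comap, LinearMap.mulRight_apply, LinearMap.mulLeft_apply] at this ⊢
    convert this using 2
    ext w
    simp [← hab, mul_comm]
  exact h2 hq

/-- Taylor expansion `f(u + t v)` as a polynomial in `t`. -/
def cgTaylor (u v : Fin 2 → ℂ) : MvPolynomial (Fin 2) ℂ →ₐ[ℂ] Polynomial ℂ :=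
  aeval fun j => Polynomial.C (u j) + Polynomial.C (v j) * Polynomial.X

/-- polarization -/
def cgPol (k : ℕ) : MvPolynomial (Fin 2) ℂ →ₗ[ℂ] CGFun where
  toFun f := fun w => (cgTaylor w.1 w.2 f).coeff k
  map_add' f g := by ext w; simp
  map_smul' c f := by ext w; simp

lemma cgPol_apply (k : ℕ) (f) (w) : cgPol k f w = (cgTaylor w.1 w.2 f).coeff k := rfl

/-- `f` has Taylor coefficients of bidegree `(j,k)` -/
def cgGood (m : ℕ) (f : MvPolynomial (Fin 2) ℂ) : Prop :=
  (∀ j k, j + k = m → cgPol k f ∈ cgU ^ j * cgV ^ k) ∧ ∀ k, m < k → cgPol k f = 0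

lemma cgGood_one : cgGood 0 1 := by
  constructor
  · intro j k h
    obtain ⟨rfl, rfl⟩ : j = 0 ∧ k = 0 := by omega
    simp only [pow_zero, mul_one]
    rw [Submodule.mem_one]
    refine ⟨1, ?_⟩
    ext w; simp [cgPol_apply]
  · intro k h
    ext w
    simp [cgPol_apply, Polynomial.coeff_one, h.ne']

lemma cgGood_X (i : Fin 2) : cgGood 1 (X i) := by
  constructor
  · intro j k h
    have : (j = 1 ∧ k = 0) ∨ (j = 0 ∧ k = 1) := by omega
    rcases this with ⟨rfl, rfl⟩ | ⟨rfl, rfl⟩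
    · simp only [pow_zero, mul_one, pow_one]
      apply Submodule.subset_span
      fin_cases i
      · left; ext w; simp [cgPol_apply, cgTaylor]
      · right; ext w; simp [cgPol_apply, cgTaylor]
    · simp only [pow_zero, one_mul, pow_one]
      apply Submodule.subset_span
      fin_cases i
      · left; ext w; simp [cgPol_apply, cgTaylor]
      · right; ext w; simp [cgPol_apply, cgTaylor]
  · intro k h
    ext w
    have : k ≠ 0 := by omega
    have : 1 ≠ k := by omega
    simp [cgPol_apply, cgTaylor, Polynomial.coeff_C, Polynomial.coeff_X, *]

lemma cgPol_mul (k : ℕ) (f g) :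
    cgPol k (f * g) = ∑ x ∈ Finset.HasAntidiagonal.antidiagonal k, cgPol x.1 f * cgPol x.2 g := by
  ext w
  simp [cgPol_apply, Polynomial.coeff_mul]

lemma cgGood_mul {a b f g} (hf : cgGood a f) (hg : cgGood b g) : cgGood (a + b) (f * g) := by
  constructor
  · intro j k h
    rw [cgPol_mul]
    apply Submodule.sum_mem
    rintro ⟨x, y⟩ hxy
    simp only [Finset.HasAntidiagonal.mem_antidiagonal] at hxy
    by_cases hx : a < x
    · simp [hf.2 x hx]
    by_cases hy : b < y
    · simp [hg.2 y hy]
    have h1 := hf.1 (a - x) x (by omega)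
    have h2 := hg.1 (b - y) y (by omega)
    have := Submodule.mul_mem_mul h1 h2
    rw [mul_mul_mul_comm, ← pow_add, ← pow_add, hxy] at this
    convert this using 3
    omega
  · intro k h
    rw [cgPol_mul]
    apply Finset.sum_eq_zero
    rintro ⟨x, y⟩ hxy
    simp only [Finset.HasAntidiagonal.mem_antidiagonal] at hxy
    by_cases hx : a < x
    · simp [hf.2 x hx]
    · simp [hg.2 y (by omega)]

lemma cgGood_X_pow (i : Fin 2) (a : ℕ) : cgGood a (X i ^ a) := by
  induction a with
  | zero => simpa using cgGood_one
  | succ a ih => rw [pow_succ]; exact cgGood_mul ih (cgGood_X i)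

lemma cgPol_mem (i : ℕ) (f : Vhom (2 * i)) : cgPol i f.1 ∈ cgU ^ i * cgV ^ i := by
  rw [cg_expand _ f]
  simp only [AddSubmonoidClass.coe_finsetSum, SetLike.val_smul, map_sum, map_smul]
  apply Submodule.sum_mem
  intro j _
  apply Submodule.smul_mem
  have h := cgGood_mul (cgGood_X_pow 0 j.val) (cgGood_X_pow 1 (2 * i - j.val))
  exact h.1 i i (by omega)

/-- u ∧ v -/
def cgDelta : CGFun := fun w => w.1 0 * w.2 1 - w.1 1 * w.2 0

lemma cgDelta_mem : cgDelta ∈ cgU * cgV := by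
  refine Submodule.sub_mem (cgU * cgV) (x := (fun w => w.1 0 * w.2 1 : CGFun))
    (y := (fun w => w.1 1 * w.2 0 : CGFun)) ?_ ?_
  · exact Submodule.mul_mem_mul (m := (fun w => w.1 0 : CGFun)) (n := (fun w => w.2 1 : CGFun))
      (Submodule.subset_span (by simp)) (Submodule.subset_span (by simp))
  · exact Submodule.mul_mem_mul (m := (fun w => w.1 1 : CGFun)) (n := (fun w => w.2 0 : CGFun))
      (Submodule.subset_span (by simp)) (Submodule.subset_span (by simp))

abbrev CGD (n : ℕ) : Type := (i : Fin (n + 1)) → Vhom (2 * i.val)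

def cgTheta (n : ℕ) : CGD n →ₗ[ℂ] CGFun where
  toFun f := ∑ i : Fin (n + 1), cgDelta ^ (n - i.val) * cgPol i.val (f i).1
  map_add' f g := by simp [mul_add, Finset.sum_add_distrib]
  map_smul' c f := by simp [Finset.smul_sum]

lemma cgTheta_apply (n : ℕ) (f : CGD n) (w) :
    cgTheta n f w = ∑ i : Fin (n + 1), cgDelta w ^ (n - i.val) * cgPol i.val (f i).1 w := by
  simp [cgTheta]

lemma cgTheta_range (n : ℕ) : LinearMap.range (cgTheta n) ≤ LinearMap.range (cgK n) := by
  rintro _ ⟨f, rfl⟩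
  apply cgK_range
  change ∑ i : Fin (n + 1), cgDelta ^ (n - i.val) * cgPol i.val (f i).1 ∈ _
  apply Submodule.sum_mem
  intro i _
  have := Submodule.mul_mem_mul (Submodule.pow_mem_pow _ cgDelta_mem (n - i.val)) (cgPol_mem i.val (f i))
  rw [mul_pow, mul_mul_mul_comm, ← pow_add, ← pow_add] at this
  rwa [show n - i.val + i.val = n by omega] at this

lemma cgPol_cont (f : MvPolynomial (Fin 2) ℂ) : ∀ k, Continuous (cgPol k f) := by
  induction f using MvPolynomial.induction_on with
  | C a =>
    intro k
    have : cgPol k (C a) = fun _ => (Polynomial.C a).coeff k := by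
      ext w; simp [cgPol_apply, cgTaylor]
    rw [this]; exact continuous_const
  | add p q hp hq => intro k; rw [map_add]; exact (hp k).add (hq k)
  | mul_X p i hp =>
    intro k
    rw [cgPol_mul]
    refine Finset.sum_induction _ Continuous (fun _ _ => Continuous.add) continuous_const ?_
    intro x _
    apply (hp _).mul
    have : cgPol x.2 (X i) = fun w => w.1 i * (Polynomial.C (1:ℂ)).coeff x.2
        + w.2 i * (Polynomial.X : Polynomial ℂ).coeff x.2 := by
      ext w
      simp only [cgPol_apply, cgTaylor, aeval_X, Polynomial.coeff_add, Polynomial.coeff_C_mul]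
      congr 1
      rw [Polynomial.coeff_C, Polynomial.coeff_C]; simp
    rw [this]
    fun_prop

lemma cgPol_diag (i : ℕ) (f : Vhom (2 * i)) (u : Fin 2 → ℂ) :
    cgPol i f.1 (u, u) = ((2 * i).choose i : ℂ) * eval u f.1 := by
  rw [cg_expand _ f]
  simp only [AddSubmonoidClass.coe_finsetSum, SetLike.val_smul, map_sum, map_smul, Finset.mul_sum,
    Finset.sum_apply, smul_eval, Pi.smul_apply]
  apply Finset.sum_congr rfl
  intro j _
  have : cgTaylor u u (X 0 ^ j.val * X 1 ^ (2 * i - j.val)) =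
      Polynomial.C (u 0 ^ j.val * u 1 ^ (2 * i - j.val)) * (1 + Polynomial.X) ^ (2 * i) := by
    have e : (1 + Polynomial.X : Polynomial ℂ) ^ (2 * i) =
      (1 + Polynomial.X) ^ j.val * (1 + Polynomial.X) ^ (2 * i - j.val) := by
      rw [← pow_add]; congr 1; omega
    rw [e]
    simp only [cgTaylor, map_mul, map_pow, aeval_X]
    rw [show ∀ a : ℂ, Polynomial.C a + Polynomial.C a * Polynomial.X = Polynomial.C a * (1 + Polynomial.X)
      from fun a => by ring, show ∀ a : ℂ, Polynomial.C a + Polynomial.C a * Polynomial.X = Polynomial.C a * (1 + Polynomial.X)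
      from fun a => by ring, mul_pow, mul_pow]
    ring
  simp only [cgPol_apply, cgMon]
  rw [this, Polynomial.coeff_C_mul, Polynomial.coeff_one_add_X_pow]
  simp
  ring

lemma cg_exists_wedge (u : Fin 2 → ℂ) (hu : u ≠ 0) : ∃ v : Fin 2 → ℂ, u 0 * v 1 - u 1 * v 0 = 1 := by
  by_cases h : u 0 = 0
  · have h1 : u 1 ≠ 0 := by
      intro h1; apply hu; ext i; fin_cases i <;> simp [h, h1]
    exact ⟨![-(u 1)⁻¹, 0], by simp [h1]⟩
  · exact ⟨![0, (u 0)⁻¹], by simp [h]⟩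

lemma cgTheta_inj (n : ℕ) : Function.Injective (cgTheta n) := by
  rw [← LinearMap.ker_eq_bot, LinearMap.ker_eq_bot']
  intro f hf
  have key : ∀ m, ∀ i : Fin (n + 1), n - i.val = m → f i = 0 := by
    intro m
    induction m using Nat.strong_induction_on with
    | _ m ih =>
    intro i hi
    have main : ∀ u : Fin 2 → ℂ, u ≠ 0 → eval u (f i).1 = 0 := by
      intro u hu
      obtain ⟨z, hz⟩ := cg_exists_wedge u hu
      let G : ℂ → ℂ := fun s => ∑ j : Fin (n + 1), if i < j then 0 else
        s ^ (i.val - j.val) * cgPol j.val (f j).1 (u, u + s • z)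
      have hGc : Continuous G := by
        apply continuous_finsetSum
        intro j _
        split_ifs
        · exact continuous_const
        · apply Continuous.mul (by fun_prop)
          exact (cgPol_cont _ _).comp (by fun_prop)
      have hG : ∀ s, s ≠ 0 → G s = 0 := by
        intro s hs
        have h := congrFun hf (u, u + s • z)
        rw [cgTheta_apply] at h
        have hd : cgDelta (u, u + s • z) = s := by
          simp only [cgDelta, Pi.add_apply, Pi.smul_apply, smul_eq_mul]
          linear_combination s * hz
        rw [hd] at h
        have : s ^ (n - i.val) * G s = 0 := by
          rw [Pi.zero_apply] at h
          rw [← h, Finset.mul_sum]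
          apply Finset.sum_congr rfl
          intro j _
          split_ifs with hij
          · rw [ih (n - j.val) (by have := Fin.lt_def.1 hij; omega) j rfl]
            simp
          · rw [← mul_assoc, ← pow_add]
            congr 2
            have := Fin.le_def.1 (not_lt.1 hij); omega
        exact (mul_eq_zero.1 this).resolve_left (pow_ne_zero _ hs)
      have hG0 : G 0 = 0 := by
        have : G = fun _ => 0 := by
          apply hGc.ext_on (dense_compl_singleton (0:ℂ)) continuous_const
          intro s hs
          exact hG s hs
        rw [this]
      have hG1 : G 0 = cgPol i.val (f i).1 (u, u) := by
        simp only [G]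
        rw [Finset.sum_eq_single i]
        · simp
        · intro j _ hj
          split_ifs with hij
          · rfl
          · have : i.val - j.val ≠ 0 := by
              have := Fin.le_def.1 (not_lt.1 hij)
              have : j.val ≠ i.val := fun h => hj (Fin.ext h)
              omega
            simp [this]
        · simp
      rw [hG1, cgPol_diag] at hG0
      refine (mul_eq_zero.1 hG0).resolve_left ?_
      exact_mod_cast (Nat.choose_pos (by omega)).ne'
    apply Subtype.ext
    apply MvPolynomial.funext
    intro u
    have hc : Continuous fun u => eval u (f i).1 := MvPolynomial.continuous_eval _
    have : (fun u => eval u (f i).1) = fun _ => 0 := by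
      apply hc.ext_on (dense_compl_singleton (0 : Fin 2 → ℂ)) continuous_const
      intro u hu
      exact main u hu
    simpa using congrFun this u
  ext1 i
  exact key _ i rfl

lemma cg_sum_odd (m : ℕ) : ∑ i : Fin m, (2 * i.val + 1) = m * m := by
  rw [Fin.sum_univ_eq_sum_range (fun i => 2 * i + 1)]
  induction m with
  | zero => simp
  | succ m ih => rw [Finset.sum_range_succ, ih]; ring

lemma cg_range_eq (n : ℕ) : LinearMap.range (cgTheta n) = LinearMap.range (cgK n) := by
  apply Submodule.eq_of_le_of_finrank_eq (cgTheta_range n)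
  rw [LinearMap.finrank_range_of_inj (cgTheta_inj n), LinearMap.finrank_range_of_inj (cgK_inj n),
    Module.finrank_pi_fintype, Module.finrank_linearMap]
  simp only [cg_finrank]
  exact cg_sum_odd (n + 1)

def cgE (n : ℕ) : Module.End ℂ (Vhom n) ≃ₗ[ℂ] CGD n :=
  (LinearEquiv.ofInjective (cgK n) (cgK_inj n)).trans
    ((LinearEquiv.ofEq _ _ (cg_range_eq n).symm).trans
      (LinearEquiv.ofInjective (cgTheta n) (cgTheta_inj n)).symm)

lemma cgE_spec (n : ℕ) (T) : cgTheta n (cgE n T) = cgK n T := by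
  have := LinearEquiv.apply_symm_apply (LinearEquiv.ofInjective (cgTheta n) (cgTheta_inj n))
    (LinearEquiv.ofEq _ _ (cg_range_eq n).symm (LinearEquiv.ofInjective (cgK n) (cgK_inj n) T))
  exact congrArg Subtype.val this

lemma cgE_unique (n : ℕ) (T) (f : CGD n) (h : cgTheta n f = cgK n T) : cgE n T = f :=
  cgTheta_inj n ((cgE_spec n T).trans h.symm)

/-- action of the transpose -/
def cgAct (A : Matrix (Fin 2) (Fin 2) ℂ) (u : Fin 2 → ℂ) : Fin 2 → ℂ := fun i => ∑ j, A j i * u j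

lemma cg_eval_subst (A : Matrix (Fin 2) (Fin 2) ℂ) (u) (p) :
    eval u (substMap A p) = eval (cgAct A u) p := by
  have : (aeval u).comp (substMap A) = (aeval (cgAct A u) : MvPolynomial (Fin 2) ℂ →ₐ[ℂ] ℂ) := by
    ext i
    simp [substMap, cgAct]
  have := DFunLike.congr_fun this p
  simpa [aeval_eq_eval] using this

lemma cg_taylor_subst (A : Matrix (Fin 2) (Fin 2) ℂ) (u v) (p) :
    cgTaylor u v (substMap A p) = cgTaylor (cgAct A u) (cgAct A v) p := by
  have : (cgTaylor u v).comp (substMap A) = cgTaylor (cgAct A u) (cgAct A v) := by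
    apply MvPolynomial.algHom_ext
    intro i
    simp only [cgTaylor, substMap, cgAct, AlgHom.comp_apply, aeval_X, map_sum, map_mul, Fin.sum_univ_two, map_add]
    simp only [← algebraMap_eq, AlgHom.commutes, Polynomial.algebraMap_eq]
    ring
  exact DFunLike.congr_fun this p

lemma cg_delta_act (A : Matrix.SpecialLinearGroup (Fin 2) ℂ) (u v) :
    cgDelta (cgAct A.1 u, cgAct A.1 v) = cgDelta (u, v) := by
  have h := A.2
  rw [Matrix.det_fin_two] at h
  simp only [cgDelta, cgAct, Fin.sum_univ_two]
  linear_combination (u 0 * v 1 - u 1 * v 0) * h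

lemma cg_eval_ell (u v) : eval u (cgEll v) = cgDelta (u, v) := by
  simp [cgEll, cgDelta]; ring

lemma cgAct_inv (A : Matrix.SpecialLinearGroup (Fin 2) ℂ) (u) : cgAct A.1 (cgAct (A⁻¹).1 u) = u := by
  have h := A.2
  rw [Matrix.det_fin_two] at h
  ext i
  simp only [cgAct, Fin.sum_univ_two, Matrix.SpecialLinearGroup.coe_inv, Matrix.adjugate_fin_two]
  fin_cases i <;> simp
  · linear_combination (u 0) * h
  · linear_combination (u 1) * h

lemma cgSym_coe (n A p) : (SymSL n A p).1 = substMap A.1 p.1 := rfl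

lemma cg_ellPow_inv (n : ℕ) (A : Matrix.SpecialLinearGroup (Fin 2) ℂ) (v) :
    SymSL n A⁻¹ (cgEllPow n v) = cgEllPow n (cgAct A.1 v) := by
  apply Subtype.ext
  rw [cgSym_coe]
  apply MvPolynomial.funext
  intro u
  rw [cg_eval_subst]
  simp only [cgEllPow, map_pow, cg_eval_ell]
  rw [← cg_delta_act A, cgAct_inv]

lemma cgK_equiv (n : ℕ) (A : Matrix.SpecialLinearGroup (Fin 2) ℂ) (T : Module.End ℂ (Vhom n)) (u v) :
    cgK n (SymSL n A ∘ₗ T ∘ₗ SymSL n A⁻¹) (u, v) = cgK n T (cgAct A.1 u, cgAct A.1 v) := by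
  rw [cgK_apply, cgK_apply]
  simp only [LinearMap.comp_apply]
  rw [cg_ellPow_inv, cgSym_coe, cg_eval_subst]

lemma cgTheta_equiv (n : ℕ) (A : Matrix.SpecialLinearGroup (Fin 2) ℂ) (f : CGD n) (u v) :
    cgTheta n (fun i => SymSL _ A (f i)) (u, v) = cgTheta n f (cgAct A.1 u, cgAct A.1 v) := by
  rw [cgTheta_apply, cgTheta_apply]
  apply Finset.sum_congr rfl
  intro i _
  rw [cg_delta_act, cgPol_apply, cgPol_apply, cgSym_coe, cg_taylor_subst]

lemma cgE_equiv (n : ℕ) (A : Matrix.SpecialLinearGroup (Fin 2) ℂ) (T : Module.End ℂ (Vhom n)) :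
    cgE n (SymSL n A ∘ₗ T ∘ₗ SymSL n A⁻¹) = fun i => SymSL _ A (cgE n T i) := by
  apply cgE_unique
  ext ⟨u, v⟩
  rw [cgTheta_equiv, cgK_equiv, cgE_spec]

/-- constants in degree zero -/
def cgConst (n : ℕ) (c : ℂ) : CGD n := Fin.cons ⟨C c, by
  rw [mem_homogeneousSubmodule]; exact isHomogeneous_C _ _⟩ (fun _ => 0)

lemma cgConst_zero (n : ℕ) (c : ℂ) : (cgConst n c 0).1 = C c := rfl
lemma cgConst_succ (n : ℕ) (c : ℂ) (i : Fin n) : cgConst n c i.succ = 0 := rfl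

lemma cgE_scalar (n : ℕ) (c : ℂ) : cgE n (c • LinearMap.id) = cgConst n c := by
  apply cgE_unique
  ext ⟨u, v⟩
  rw [cgTheta_apply, cgK_apply, Fin.sum_univ_succ]
  simp [cgConst_zero, cgConst_succ, cgPol_apply, cgTaylor, cgEllPow, cg_eval_ell]
  ring

lemma cgE_zero_tail (n : ℕ) (T) (h : ∀ i : Fin n, cgE n T i.succ = 0) : ∃ c : ℂ, T = c • LinearMap.id := by
  have h0 : ((cgE n T 0).1).IsHomogeneous 0 := (mem_homogeneousSubmodule _ _).1 (cgE n T 0).2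
  have h1 := (totalDegree_eq_zero_iff_eq_C).1 (Nat.le_zero.1 h0.totalDegree_le)
  refine ⟨_, (cgE n).injective (Eq.trans ?_ (cgE_scalar n (coeff 0 (cgE n T 0).1)).symm)⟩
  ext1 i
  refine Fin.cases ?_ (fun i => ?_) i
  · apply Subtype.ext
    exact h1
  · rw [h i]; rfl

def cgTail (n : ℕ) : slV n →ₗ[ℂ] ((i : Fin n) → Vhom (2 * (i.val + 1))) where
  toFun T := fun i => cgE n T.1 i.succ
  map_add' S T := by ext1 i; simp
  map_smul' c T := by ext1 i; simp

lemma cg_trace_scalar (n : ℕ) (c : ℂ) :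
    LinearMap.trace ℂ (Vhom n) (c • LinearMap.id) = c * (n + 1) := by
  rw [map_smul, LinearMap.trace_id, cg_finrank]; simp

lemma cgTail_bij (n : ℕ) : Function.Bijective (cgTail n) := by
  have hn : (n + 1 : ℂ) ≠ 0 := by exact_mod_cast Nat.succ_ne_zero n
  constructor
  · refine cg_inj_aux (cgTail n) ?_
    intro T hT
    obtain ⟨c, hc⟩ := cgE_zero_tail n T.1 (fun i => congrFun hT i)
    have ht : LinearMap.trace ℂ (Vhom n) T.1 = 0 := T.2
    rw [hc, cg_trace_scalar] at ht
    have : c = 0 := (mul_eq_zero.1 ht).resolve_right hn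
    apply Subtype.ext
    rw [hc, this]; simp
  · intro g
    let T := (cgE n).symm (Fin.cons 0 g)
    let c := LinearMap.trace ℂ (Vhom n) T / (n + 1)
    refine ⟨⟨T + (-c) • LinearMap.id, ?_⟩, ?_⟩
    · rw [slV, LinearMap.mem_ker, map_add, cg_trace_scalar]
      simp only [c]; field_simp; simp
    · funext i
      change cgE n (T + (-c) • LinearMap.id) i.succ = g i
      rw [map_add, cgE_scalar]
      simp only [T, LinearEquiv.apply_symm_apply]
      simp [cgConst_succ]

/-- Clebsch–Gordan formula for the adjoint of `Sym^n`.
There is a ℂ-linear `SL₂(ℂ)`-equivariant isomorphism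
`sl_{n+1}(ℂ) ≅ ⊕_{i=1}^{n} V_{2i}`, where `SL₂(ℂ)` acts on `sl_{n+1}(ℂ)` by
`A · X = Sym^n(A) ∘ X ∘ Sym^n(A)⁻¹` and on each summand `V_{2i}` via `Sym^{2i}`. -/
theorem clebsch_gordan_adjoint_symPow (n : ℕ) (hn : 1 ≤ n) :
    ∃ e : (slV n) ≃ₗ[ℂ] ((i : Fin n) → Vhom (2 * (i.val + 1))),
      ∀ (A : Matrix.SpecialLinearGroup (Fin 2) ℂ) (Xm Ym : slV n),
        (Ym : Module.End ℂ (Vhom n)) =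
            SymSL n A ∘ₗ (Xm : Module.End ℂ (Vhom n)) ∘ₗ SymSL n A⁻¹ →
          e Ym = fun i => SymSL (2 * (i.val + 1)) A (e Xm i) := by
  refine ⟨LinearEquiv.ofBijective (cgTail n) (cgTail_bij n), ?_⟩
  intro A Xm Ym h
  funext i
  change cgE n Ym.1 i.succ = SymSL _ A (cgE n Xm.1 i.succ)
  rw [h, cgE_equiv]
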